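/- arXiv:2306.07008 — 4 statements merged into one kernel-verified Lean document; each statement's English description precedes it below -/
import Mathlib

section
/- Fix a positive integer N and a real ν. Then Σ_{k=0}^{N−1} s_{ν,k} = 0 and Σ_{k=0}^{N−1} c_{ν,k} = 1, and for every integer t with 1 ≤ t ≤ N − 1: Σ_{k=0}^{N−1} exp(−2πi·k·t/N)·s_{ν,k} = sin(πν)·exp(−iπν)·exp(2πi·ν·t/N) and Σ_{k=0}^{N−1} exp(−2πi·k·t/N)·c_{ν,k} = cos(πν)·exp(−iπν)·exp(2πi·ν·t/N). -/
/-- The Dirichlet kernel `D_N(ν) = (1/N) ∑_{m=0}^{N-1} cos(π ν (2m+1-N)/N)`. -/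
noncomputable def dirichlet (N : ℕ) (ν : ℝ) : ℝ :=
  (1 / (N : ℝ)) * ∑ m ∈ Finset.range N,
    Real.cos (Real.pi * ν * (2 * (m : ℝ) + 1 - (N : ℝ)) / (N : ℝ))

/-- The vector `s_ν ∈ ℝ^N`, `s_{ν,k} = sin(π_N (k+ν)) D_N(k+ν)` with `π_N = π(1-1/N)`. -/
noncomputable def sVec (N : ℕ) (ν : ℝ) (k : ℕ) : ℝ :=
  Real.sin (Real.pi * (1 - 1 / (N : ℝ)) * ((k : ℝ) + ν)) * dirichlet N ((k : ℝ) + ν)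

/-- The vector `c_ν ∈ ℝ^N`, `c_{ν,k} = cos(π_N (k+ν)) D_N(k+ν)` with `π_N = π(1-1/N)`. -/
noncomputable def cVec (N : ℕ) (ν : ℝ) (k : ℕ) : ℝ :=
  Real.cos (Real.pi * (1 - 1 / (N : ℝ)) * ((k : ℝ) + ν)) * dirichlet N ((k : ℝ) + ν)

open Complex in
lemma orth_aux (N : ℕ) (hN : 0 < N) (j : ℤ) :
    ∑ k ∈ Finset.range N, exp (2 * Real.pi * I * k * j / N) = if (N : ℤ) ∣ j then (N : ℂ) else 0 := by
  have hN' : (N : ℂ) ≠ 0 := by exact_mod_cast hN.ne'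
  have hpi : (2 * Real.pi * I : ℂ) ≠ 0 := Complex.two_pi_I_ne_zero
  have h1 : ∀ k ∈ Finset.range N, exp (2 * Real.pi * I * k * j / N)
      = (exp (2 * Real.pi * I * j / N)) ^ k := by
    intro k _
    rw [← Complex.exp_nat_mul]; congr 1; ring
  rw [Finset.sum_congr rfl h1]
  split_ifs with h
  · obtain ⟨q, rfl⟩ := h
    have : exp (2 * Real.pi * I * ((N * q : ℤ) : ℂ) / N) = 1 := by
      rw [Complex.exp_eq_one_iff]
      refine ⟨q, ?_⟩
      push_cast; field_simp
    rw [this]; simp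
  · have hne : exp (2 * Real.pi * I * j / N) ≠ 1 := by
      intro h2
      rw [Complex.exp_eq_one_iff] at h2
      obtain ⟨n, hn⟩ := h2
      apply h
      refine ⟨n, ?_⟩
      have h3 : (2 * Real.pi * I : ℂ) * j = (2 * Real.pi * I) * (N * n) := by
        rw [div_eq_iff hN'] at hn
        rw [hn]; ring
      have h4 := mul_left_cancel₀ hpi h3
      exact_mod_cast h4
    rw [geom_sum_eq hne, ← Complex.exp_nat_mul]
    have : exp (N * (2 * Real.pi * I * j / N)) = 1 := by
      rw [Complex.exp_eq_one_iff]
      refine ⟨j, ?_⟩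
      field_simp
    rw [this]; simp

open Complex in
lemma four_aux (N : ℕ) (hN : 0 < N) (ν : ℝ) (σ t : ℤ) (r : ℕ) (hr : r < N)
    (hm : ∀ m : ℕ, m < N → ((N : ℤ) ∣ σ * m - t ↔ m = r)) :
    ∑ k ∈ Finset.range N, exp (-(2 * Real.pi * I * k * t / N)) *
      ((1 / (N : ℂ)) * ∑ m ∈ Finset.range N, exp (σ * (2 * Real.pi * I * (k + ν) * m / N)))
    = exp (σ * (2 * Real.pi * I * ν * r / N)) := by
  have hN' : (N : ℂ) ≠ 0 := by exact_mod_cast hN.ne'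
  simp only [Finset.mul_sum]
  rw [Finset.sum_comm]
  have h1 : ∀ m ∈ Finset.range N, ∑ k ∈ Finset.range N, exp (-(2 * Real.pi * I * k * t / N)) *
      ((1 / (N : ℂ)) * exp (σ * (2 * Real.pi * I * (k + ν) * m / N)))
      = if m = r then exp (σ * (2 * Real.pi * I * ν * m / N)) else 0 := by
    intro m hmN
    have h2 : ∀ k ∈ Finset.range N, exp (-(2 * Real.pi * I * k * t / N)) *
      ((1 / (N : ℂ)) * exp (σ * (2 * Real.pi * I * (k + ν) * m / N)))
      = ((1 / (N : ℂ)) * exp (σ * (2 * Real.pi * I * ν * m / N))) *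
        exp (2 * Real.pi * I * k * ((σ * m - t : ℤ) : ℂ) / N) := by
      intro k _
      rw [mul_left_comm, ← Complex.exp_add, mul_assoc (1 / (N : ℂ)), ← Complex.exp_add]
      congr 2
      push_cast; ring
    rw [Finset.sum_congr rfl h2, ← Finset.mul_sum, orth_aux N hN]
    simp only [hm m (Finset.mem_range.1 hmN)]
    split_ifs
    · field_simp
    · simp
  rw [Finset.sum_congr rfl h1]
  simp [hr]

lemma sin_sum_aux (N : ℕ) (x : ℝ) : ∑ m ∈ Finset.range N,
    Real.sin (Real.pi * x * (2 * (m : ℝ) + 1 - (N : ℝ)) / (N : ℝ)) = 0 := by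
  have h := Finset.sum_range_reflect
    (fun m : ℕ => Real.sin (Real.pi * x * (2 * (m : ℝ) + 1 - (N : ℝ)) / (N : ℝ))) N
  have h2 : ∀ m ∈ Finset.range N,
      Real.sin (Real.pi * x * (2 * ((N - 1 - m : ℕ) : ℝ) + 1 - (N : ℝ)) / (N : ℝ))
      = - Real.sin (Real.pi * x * (2 * (m : ℝ) + 1 - (N : ℝ)) / (N : ℝ)) := by
    intro m hm
    have : m + 1 ≤ N := Finset.mem_range.1 hm
    rw [Nat.sub_sub, Nat.cast_sub (by omega), ← Real.sin_neg]
    congr 1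
    push_cast; ring
  rw [Finset.sum_congr rfl h2, Finset.sum_neg_distrib] at h
  linarith

lemma sVec_aux (N : ℕ) (hN : 0 < N) (ν : ℝ) (k : ℕ) : sVec N ν k =
    (1 / (N : ℝ)) * ∑ m ∈ Finset.range N, Real.sin (2 * Real.pi * (k + ν) * m / N) := by
  have hN' : (N : ℝ) ≠ 0 := by exact_mod_cast hN.ne'
  have h1 : ∀ m ∈ Finset.range N, Real.sin (2 * Real.pi * (k + ν) * m / N) =
      Real.sin (Real.pi * (1 - 1 / (N : ℝ)) * ((k : ℝ) + ν)) *
        Real.cos (Real.pi * (k + ν) * (2 * (m : ℝ) + 1 - (N : ℝ)) / (N : ℝ)) +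
      Real.cos (Real.pi * (1 - 1 / (N : ℝ)) * ((k : ℝ) + ν)) *
        Real.sin (Real.pi * (k + ν) * (2 * (m : ℝ) + 1 - (N : ℝ)) / (N : ℝ)) := by
    intro m _
    rw [← Real.sin_add]; congr 1; field_simp; ring
  rw [Finset.sum_congr rfl h1, Finset.sum_add_distrib, ← Finset.mul_sum, ← Finset.mul_sum,
    sin_sum_aux, sVec, dirichlet]
  ring

lemma cVec_aux (N : ℕ) (hN : 0 < N) (ν : ℝ) (k : ℕ) : cVec N ν k =
    (1 / (N : ℝ)) * ∑ m ∈ Finset.range N, Real.cos (2 * Real.pi * (k + ν) * m / N) := by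
  have hN' : (N : ℝ) ≠ 0 := by exact_mod_cast hN.ne'
  have h1 : ∀ m ∈ Finset.range N, Real.cos (2 * Real.pi * (k + ν) * m / N) =
      Real.cos (Real.pi * (1 - 1 / (N : ℝ)) * ((k : ℝ) + ν)) *
        Real.cos (Real.pi * (k + ν) * (2 * (m : ℝ) + 1 - (N : ℝ)) / (N : ℝ)) -
      Real.sin (Real.pi * (1 - 1 / (N : ℝ)) * ((k : ℝ) + ν)) *
        Real.sin (Real.pi * (k + ν) * (2 * (m : ℝ) + 1 - (N : ℝ)) / (N : ℝ)) := by
    intro m _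
    rw [← Real.cos_add]; congr 1; field_simp; ring
  rw [Finset.sum_congr rfl h1, Finset.sum_sub_distrib, ← Finset.mul_sum, ← Finset.mul_sum,
    sin_sum_aux, cVec, dirichlet]
  ring

open Complex in
lemma cs_aux (N : ℕ) (hN : 0 < N) (ν : ℝ) (t : ℕ) (r : ℕ) (hr : r < N) (ht : t < N)
    (hm : ∀ m : ℕ, m < N → ((N : ℤ) ∣ (-1) * m - (t : ℤ) ↔ m = r)) :
    (∑ k ∈ Finset.range N,
          exp (((-(2 * Real.pi * (k : ℝ) * (t : ℝ) / (N : ℝ))) : ℝ) * I) *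
            ((sVec N ν k : ℝ) : ℂ)
      = (exp (2 * Real.pi * I * ν * t / N) - exp (-(2 * Real.pi * I * ν * r / N))) / (2 * I)) ∧
    (∑ k ∈ Finset.range N,
          exp (((-(2 * Real.pi * (k : ℝ) * (t : ℝ) / (N : ℝ))) : ℝ) * I) *
            ((cVec N ν k : ℝ) : ℂ)
      = (exp (2 * Real.pi * I * ν * t / N) + exp (-(2 * Real.pi * I * ν * r / N))) / 2) := by
  have hA := four_aux N hN ν 1 t t ht (by
    intro m hmN
    constructor
    · intro h
      have h2 := Int.eq_zero_of_abs_lt_dvd h (by rw [abs_lt]; constructor <;> omega)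
      omega
    · rintro rfl; simp)
  have hB := four_aux N hN ν (-1) t r hr hm
  simp only [Int.cast_one, one_mul, Int.cast_neg, neg_mul, Int.cast_natCast] at hA hB
  rw [← hA, ← hB, ← Finset.sum_sub_distrib, ← Finset.sum_add_distrib, Finset.sum_div,
    Finset.sum_div]
  constructor <;> refine Finset.sum_congr rfl fun k _ => ?_
  · rw [sVec_aux N hN, ← mul_sub, ← mul_sub, ← Finset.sum_sub_distrib, mul_div_assoc (Complex.exp _),
      mul_div_assoc (1 / (N : ℂ)), Finset.sum_div]
    push_cast
    congr 1
    · congr 1; ring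
    · congr 1
      refine Finset.sum_congr rfl fun m _ => ?_
      rw [Complex.sin]
      have e1 : (2 * Real.pi * (k + ν) * m / N : ℂ) * I = 2 * Real.pi * I * (k + ν) * m / N := by ring
      rw [neg_mul, e1]
      field_simp
      rw [I_sq]; ring
  · rw [cVec_aux N hN, ← mul_add, ← mul_add, ← Finset.sum_add_distrib, mul_div_assoc (Complex.exp _),
      mul_div_assoc (1 / (N : ℂ)), Finset.sum_div]
    push_cast
    congr 1
    · congr 1; ring
    · congr 1
      refine Finset.sum_congr rfl fun m _ => ?_
      rw [Complex.cos]
      have e1 : (2 * Real.pi * (k + ν) * m / N : ℂ) * I = 2 * Real.pi * I * (k + ν) * m / N := by ring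
      rw [neg_mul, e1]

/-- `∑_k s_{ν,k} = 0`, `∑_k c_{ν,k} = 1`, and for `1 ≤ t ≤ N-1`:
`∑_k exp(−2πi k t/N) s_{ν,k} = sin(πν) exp(−iπν) exp(2πi ν t/N)` and
`∑_k exp(−2πi k t/N) c_{ν,k} = cos(πν) exp(−iπν) exp(2πi ν t/N)`. -/
theorem sVec_cVec_fourier (N : ℕ) (hN : 0 < N) (ν : ℝ) :
    (∑ k ∈ Finset.range N, sVec N ν k = 0) ∧
    (∑ k ∈ Finset.range N, cVec N ν k = 1) ∧
    (∀ t : ℕ, 1 ≤ t → t ≤ N - 1 →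
      (∑ k ∈ Finset.range N,
          Complex.exp (((-(2 * Real.pi * (k : ℝ) * (t : ℝ) / (N : ℝ))) : ℝ) * Complex.I) *
            ((sVec N ν k : ℝ) : ℂ)
        = ((Real.sin (Real.pi * ν) : ℝ) : ℂ) *
            Complex.exp (((-(Real.pi * ν)) : ℝ) * Complex.I) *
            Complex.exp (((2 * Real.pi * ν * (t : ℝ) / (N : ℝ)) : ℝ) * Complex.I)) ∧
      (∑ k ∈ Finset.range N,
          Complex.exp (((-(2 * Real.pi * (k : ℝ) * (t : ℝ) / (N : ℝ))) : ℝ) * Complex.I) *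
            ((cVec N ν k : ℝ) : ℂ)
        = ((Real.cos (Real.pi * ν) : ℝ) : ℂ) *
            Complex.exp (((-(Real.pi * ν)) : ℝ) * Complex.I) *
            Complex.exp (((2 * Real.pi * ν * (t : ℝ) / (N : ℝ)) : ℝ) * Complex.I))) := by
  have h0 := cs_aux N hN ν 0 0 hN hN (by
    intro m hmN
    constructor
    · intro h
      have h2 := Int.eq_zero_of_abs_lt_dvd h (by rw [abs_lt]; constructor <;> omega)
      omega
    · rintro rfl; simp)
  refine ⟨?_, ?_, ?_⟩
  · have := h0.1
    simp at this
    exact_mod_cast this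
  · have := h0.2
    norm_num at this
    exact_mod_cast this
  · intro t ht1 ht2
    have hN' : (N : ℂ) ≠ 0 := by exact_mod_cast hN.ne'
    have h := cs_aux N hN ν t (N - t) (by omega) (by omega) (by
      intro m hmN
      constructor
      · intro h
        have h1 : (N : ℤ) ∣ (N : ℤ) - m - t := by
          have := dvd_add (dvd_refl (N : ℤ)) h
          rwa [show (N : ℤ) - m - t = N + ((-1) * m - t) by ring]
        have h2 := Int.eq_zero_of_abs_lt_dvd h1 (by rw [abs_lt]; constructor <;> omega)
        omega
      · rintro rfl
        refine ⟨-1, ?_⟩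
        rw [Nat.cast_sub (by omega)]; ring)
    rw [h.1, h.2, Nat.cast_sub (by omega)]
    have e1 : Complex.exp (2 * Real.pi * Complex.I * ν * t / N) =
        Complex.exp (Real.pi * ν * Complex.I) * Complex.exp (-(Real.pi * ν) * Complex.I) *
        Complex.exp (2 * Real.pi * ν * t / N * Complex.I) := by
      rw [← Complex.exp_add, ← Complex.exp_add]; congr 1; ring
    have e2 : Complex.exp (-(2 * Real.pi * Complex.I * ν * ((N : ℂ) - t) / N)) =
        Complex.exp (-(Real.pi * ν) * Complex.I) * Complex.exp (-(Real.pi * ν) * Complex.I) *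
        Complex.exp (2 * Real.pi * ν * t / N * Complex.I) := by
      rw [← Complex.exp_add, ← Complex.exp_add]; congr 1; field_simp; ring
    rw [e1, e2]
    push_cast
    rw [Complex.sin, Complex.cos]
    constructor
    · field_simp
      rw [Complex.I_sq]; ring
    · ring
end

section
/- Let N ≥ 100 be an integer, let x ∈ ℝ^N have nonnegative entries, and let ν ∈ ℝ with |ν| ≤ 2/5. Set x^I := Im(F_ν^{−1}(F x)). Then ‖x^I‖₂² ≥ ν²·[(4 + 2π²/N)·‖x‖₂² − (2π²/N)·‖x‖₁²]. -/
open Matrix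

/-- The shifted Fourier matrix `(F_ν)_{t,k} = exp(−2πi t (k+ν)/N)`; `F = Fmat N 0` is the
discrete Fourier matrix. -/
noncomputable def Fmat (N : ℕ) (ν : ℝ) : Matrix (Fin N) (Fin N) ℂ :=
  Matrix.of fun t k =>
    Complex.exp (((-(2 * Real.pi * ((t : ℕ) : ℝ) * (((k : ℕ) : ℝ) + ν) / (N : ℝ))) : ℝ)
      * Complex.I)

/-- `F_ν^{-1} (F x)` where `F_ν^{-1} = (1/N) F_ν^*`. -/
noncomputable def gridTransform (N : ℕ) (ν : ℝ) (x : Fin N → ℝ) : Fin N → ℂ :=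
  (((N : ℂ))⁻¹ • (Fmat N ν)ᴴ) *ᵥ ((Fmat N 0) *ᵥ fun k => ((x k : ℝ) : ℂ))

noncomputable def ee (N : ℕ) (r : ℝ) : ℂ :=
  Complex.exp (((2 * Real.pi * r / (N : ℝ) : ℝ) : ℂ) * Complex.I)

lemma ee_add (N : ℕ) (r s : ℝ) : ee N (r + s) = ee N r * ee N s := by
  unfold ee
  rw [← Complex.exp_add]
  congr 1
  push_cast
  ring

lemma ee_zero (N : ℕ) : ee N 0 = 1 := by simp [ee]

lemma ee_conj (N : ℕ) (r : ℝ) : (starRingEnd ℂ) (ee N r) = ee N (-r) := by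
  unfold ee
  rw [← Complex.exp_conj]
  congr 1
  rw [map_mul, Complex.conj_ofReal, Complex.conj_I]
  push_cast
  ring

lemma ee_mul_nat (N : ℕ) (r : ℝ) (n : ℕ) : ee N (r * n) = ee N r ^ n := by
  unfold ee
  rw [← Complex.exp_nat_mul]
  congr 1
  push_cast
  ring

lemma ee_N (N : ℕ) (hN : 0 < N) (n : ℤ) : ee N (N * n) = 1 := by
  unfold ee
  rw [Complex.exp_eq_one_iff]
  have : (N : ℂ) ≠ 0 := by exact_mod_cast hN.ne'
  refine ⟨n, ?_⟩
  push_cast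
  field_simp

lemma ee_eq_one (N : ℕ) (hN : 0 < N) (j : ℤ) (h : ee N j = 1) : (N : ℤ) ∣ j := by
  unfold ee at h
  rw [Complex.exp_eq_one_iff] at h
  obtain ⟨m, hm⟩ := h
  have h0 : (N : ℂ) ≠ 0 := by exact_mod_cast hN.ne'
  have hpi : (Real.pi : ℂ) ≠ 0 := by exact_mod_cast Real.pi_ne_zero
  have hI := Complex.I_ne_zero
  refine ⟨m, ?_⟩
  push_cast at hm
  have h2 : (2 * Real.pi * Complex.I : ℂ) * j = (2 * Real.pi * Complex.I) * (N * m) := by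
    field_simp at hm
    linear_combination (2 * Real.pi * Complex.I : ℂ) * hm
  have h3 := mul_left_cancel₀ (by simp [hpi]) h2
  exact_mod_cast h3

lemma ortho (N : ℕ) (hN : 0 < N) (t s : Fin N) :
    ∑ n : Fin N, ee N ((t : ℕ) * (n : ℕ)) * ee N (-((s : ℕ) * (n : ℕ)))
      = if t = s then (N : ℂ) else 0 := by
  have h1 : ∀ n : Fin N, ee N ((t : ℕ) * (n : ℕ)) * ee N (-((s : ℕ) * (n : ℕ)))
      = ee N ((((t : ℕ) : ℤ) - ((s : ℕ) : ℤ) : ℤ) : ℝ) ^ (n : ℕ) := by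
    intro n
    rw [← ee_add, ← ee_mul_nat]
    congr 1
    push_cast
    ring
  simp only [h1]
  rw [Fin.sum_univ_eq_sum_range (fun n => ee N ((((t : ℕ) : ℤ) - ((s : ℕ) : ℤ) : ℤ) : ℝ) ^ n)]
  split_ifs with h
  · subst h
    simp [ee_zero]
  · have hne : ee N ((((t : ℕ) : ℤ) - ((s : ℕ) : ℤ) : ℤ) : ℝ) ≠ 1 := by
      intro hh
      have hd := ee_eq_one N hN _ hh
      apply h
      have ht := t.2
      have hs := s.2
      have := Int.eq_zero_of_abs_lt_dvd hd (by rw [abs_lt]; omega)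
      apply Fin.ext
      omega
    rw [geom_sum_eq hne, ← ee_mul_nat, mul_comm, ee_N N hN]
    simp

lemma bilin (N : ℕ) (hN : 0 < N) (a b : Fin N → ℂ) :
    ∑ n : Fin N, (∑ t : Fin N, a t * ee N ((t : ℕ) * (n : ℕ)))
      * (∑ s : Fin N, b s * ee N (-((s : ℕ) * (n : ℕ)))) = N * ∑ t, a t * b t := by
  simp only [Finset.sum_mul_sum]
  rw [Finset.sum_comm, Finset.mul_sum]
  refine Finset.sum_congr rfl fun t _ => ?_
  rw [Finset.sum_comm]
  have : ∀ s : Fin N, ∑ n : Fin N, a t * ee N ((t : ℕ) * (n : ℕ)) *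
      (b s * ee N (-((s : ℕ) * (n : ℕ)))) = a t * b s * (if t = s then (N : ℂ) else 0) := by
    intro s
    rw [← ortho N hN t s, Finset.mul_sum]
    refine Finset.sum_congr rfl fun n _ => ?_
    ring
  simp only [this]
  simp
  ring

lemma neg_val (N : ℕ) [NeZero N] (t : Fin N) (h : t ≠ 0) :
    (((-t : Fin N) : ℕ) : ℝ) = N - ((t : ℕ) : ℝ) := by
  have h1 : ((-t : Fin N) : ℕ) + (t : ℕ) = N := by
    rw [Fin.val_neg]
    simp only [h, if_false]
    have := t.2
    omega
  have : ((((-t : Fin N) : ℕ) + (t : ℕ) : ℕ) : ℝ) = N := by rw [h1]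
  push_cast at this
  linarith

lemma ee_negval (N : ℕ) [NeZero N] (t : Fin N) (n : ℤ) :
    ee N (((-t : Fin N) : ℕ) * n) = ee N (-((t : ℕ) * n)) := by
  by_cases h : t = 0
  · subst h; simp
  · rw [neg_val N t h, sub_mul, sub_eq_add_neg, ee_add, ee_N N (NeZero.pos N), one_mul]

lemma normSq_mul_conj (z : ℂ) : z * (starRingEnd ℂ) z = ((Complex.normSq z : ℝ) : ℂ) :=
  Complex.mul_conj z

lemma parseval (N : ℕ) (hN : 0 < N) (a : Fin N → ℂ) :
    ∑ n : Fin N, Complex.normSq (∑ t : Fin N, a t * ee N ((t : ℕ) * (n : ℕ)))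
      = N * ∑ t, Complex.normSq (a t) := by
  have h := bilin N hN a (fun t => (starRingEnd ℂ) (a t))
  have h1 : ∀ n : Fin N, (∑ s : Fin N, (starRingEnd ℂ) (a s) * ee N (-((s : ℕ) * (n : ℕ))))
      = (starRingEnd ℂ) (∑ t : Fin N, a t * ee N ((t : ℕ) * (n : ℕ))) := by
    intro n
    simp only [map_sum, map_mul, ee_conj]
  simp only [h1, normSq_mul_conj] at h
  exact_mod_cast h

lemma sumsq (N : ℕ) [NeZero N] (a : Fin N → ℂ) :
    ∑ n : Fin N, (∑ t : Fin N, a t * ee N ((t : ℕ) * (n : ℕ))) ^ 2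
      = N * ∑ t, a t * a (-t) := by
  rw [← bilin N (NeZero.pos N) a (fun t => a (-t))]
  refine Finset.sum_congr rfl fun n _ => ?_
  rw [sq]
  congr 1
  rw [← Equiv.sum_comp (Equiv.neg (Fin N))]
  refine Finset.sum_congr rfl fun t _ => ?_
  simp only [Equiv.neg_apply]
  have := ee_negval N t ((n : ℕ) : ℤ)
  push_cast at this
  rw [this]

noncomputable def XX (N : ℕ) (x : Fin N → ℝ) (t : Fin N) : ℂ :=
  ∑ k : Fin N, (x k : ℂ) * ee N (-((t : ℕ) * (k : ℕ)))

lemma XX_neg (N : ℕ) [NeZero N] (x : Fin N → ℝ) (t : Fin N) :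
    XX N x (-t) = (starRingEnd ℂ) (XX N x t) := by
  unfold XX
  simp only [map_sum, map_mul, ee_conj, Complex.conj_ofReal]
  refine Finset.sum_congr rfl fun k _ => ?_
  have := ee_negval N t (-((k : ℕ) : ℤ))
  push_cast at this
  simp only [mul_neg] at this
  rw [this]

lemma XX_parseval (N : ℕ) (hN : 0 < N) (x : Fin N → ℝ) :
    ∑ t, Complex.normSq (XX N x t) = N * ∑ k, x k ^ 2 := by
  have h := parseval N hN (fun k => (x k : ℂ))
  have h1 : ∀ t : Fin N, Complex.normSq (∑ k : Fin N, (x k : ℂ) * ee N ((k : ℕ) * (t : ℕ)))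
      = Complex.normSq (XX N x t) := by
    intro t
    rw [← Complex.normSq_conj]
    congr 1
    unfold XX
    simp only [map_sum, map_mul, ee_conj, Complex.conj_ofReal]
    refine Finset.sum_congr rfl fun k _ => ?_
    rw [mul_comm ((t : ℕ) : ℝ)]
  simp only [h1] at h
  rw [h]
  congr 1
  refine Finset.sum_congr rfl fun k _ => ?_
  rw [Complex.normSq_ofReal, sq]

lemma XX_zero (N : ℕ) [NeZero N] (x : Fin N → ℝ) :
    XX N x 0 = ((∑ k, x k : ℝ) : ℂ) := by
  unfold XX
  simp [ee_zero]

noncomputable def aa (N : ℕ) (ν : ℝ) (x : Fin N → ℝ) (t : Fin N) : ℂ :=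
  XX N x t * ee N ((t : ℕ) * ν)

lemma normSq_ee (N : ℕ) (r : ℝ) : Complex.normSq (ee N r) = 1 := by
  have h := Complex.mul_conj (ee N r)
  rw [ee_conj, ← ee_add, add_neg_cancel, ee_zero] at h
  exact_mod_cast h.symm

lemma grid_eq (N : ℕ) (ν : ℝ) (x : Fin N → ℝ) (n : Fin N) :
    gridTransform N ν x n
      = ((N : ℝ)⁻¹ : ℝ) * ∑ t : Fin N, aa N ν x t * ee N ((t : ℕ) * (n : ℕ)) := by
  unfold gridTransform
  rw [Matrix.smul_mulVec]
  simp only [Pi.smul_apply, smul_eq_mul, Matrix.mulVec, dotProduct]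
  push_cast
  congr 1
  refine Finset.sum_congr rfl fun t _ => ?_
  unfold aa XX
  have h1 : (Fmat N ν)ᴴ n t = ee N ((t : ℕ) * ν) * ee N ((t : ℕ) * (n : ℕ)) := by
    rw [Matrix.conjTranspose_apply, ← ee_add]
    have : Fmat N ν t n = ee N (-((t : ℕ) * ν + (t : ℕ) * (n : ℕ))) := by
      simp only [Fmat, ee, Matrix.of_apply]
      congr 3
      ring
    rw [this]
    have h := ee_conj N (-((t : ℕ) * ν + (t : ℕ) * (n : ℕ)))
    rw [neg_neg] at h
    exact h
  have h2 : ∀ k, Fmat N 0 t k = ee N (-((t : ℕ) * (k : ℕ))) := by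
    intro k
    simp only [Fmat, ee, Matrix.of_apply]
    congr 3
    ring
  rw [h1]
  simp only [h2]
  have h3 : ∀ k, (x k : ℂ) * ee N (-((t : ℕ) * (k : ℕ))) = ee N (-((t : ℕ) * (k : ℕ))) * x k :=
    fun k => mul_comm _ _
  simp only [h3]
  ring

lemma aa_prod (N : ℕ) [NeZero N] (ν : ℝ) (x : Fin N → ℝ) (t : Fin N) :
    (aa N ν x t * aa N ν x (-t)).re = Real.cos (2 * Real.pi * ν) * Complex.normSq (XX N x t)
      + (if t = 0 then (1 - Real.cos (2 * Real.pi * ν)) * Complex.normSq (XX N x 0) else 0) := by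
  unfold aa
  have e1 : XX N x t * ee N ((t : ℕ) * ν) * (XX N x (-t) * ee N (((-t : Fin N) : ℕ) * ν))
     = ((Complex.normSq (XX N x t) : ℝ) : ℂ) * ee N ((((t : ℕ) : ℝ) + ((-t : Fin N) : ℕ)) * ν) := by
    rw [add_mul, ee_add, XX_neg, ← Complex.mul_conj]
    ring
  rw [e1, Complex.re_ofReal_mul]
  split_ifs with h
  · subst h
    simp [ee_zero]
    ring
  · rw [neg_val N t h]
    have : ee N ((((t : ℕ) : ℝ) + (N - ((t : ℕ) : ℝ))) * ν)
        = Complex.exp (((2 * Real.pi * ν : ℝ) : ℂ) * Complex.I) := by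
      unfold ee
      congr 3
      have : (N : ℝ) ≠ 0 := NeZero.ne _
      field_simp
      ring
    rw [this, Complex.exp_ofReal_mul_I_re]
    ring

lemma exact_id (N : ℕ) [NeZero N] (ν : ℝ) (x : Fin N → ℝ) :
    ∑ n, ((gridTransform N ν x n).im)^2
      = Real.sin (Real.pi * ν) ^ 2 * (∑ n, x n ^ 2 - (∑ n, x n) ^ 2 / N) := by
  have hN0 : (N : ℝ) ≠ 0 := NeZero.ne _
  have hN : 0 < N := NeZero.pos N
  set y : Fin N → ℂ := fun n => ∑ t : Fin N, aa N ν x t * ee N ((t : ℕ) * (n : ℕ)) with hy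
  have hp : ∑ n, Complex.normSq (y n) = N * (N * ∑ k, x k ^ 2) := by
    rw [hy, parseval N hN, ← XX_parseval N hN]
    congr 1
    refine Finset.sum_congr rfl fun t _ => ?_
    simp [aa, normSq_ee]
  have hs : ∑ n, ((y n) ^ 2).re = N * (Real.cos (2 * Real.pi * ν) * (N * ∑ k, x k ^ 2)
      + (1 - Real.cos (2 * Real.pi * ν)) * (∑ k, x k) ^ 2) := by
    rw [← Complex.re_sum, hy, sumsq, ← Complex.ofReal_natCast, Complex.re_ofReal_mul,
      Complex.re_sum]
    simp only [aa_prod]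
    rw [Finset.sum_add_distrib, ← Finset.mul_sum, XX_parseval N hN, XX_zero,
      Complex.normSq_ofReal, Finset.sum_ite_eq' Finset.univ (0 : Fin N)]
    simp only [Finset.mem_univ, if_true]
    ring
  have hi : ∀ n, ((gridTransform N ν x n).im)^2
      = (N : ℝ)⁻¹ ^ 2 / 2 * (Complex.normSq (y n) - ((y n) ^ 2).re) := by
    intro n
    rw [grid_eq, Complex.im_ofReal_mul, sq (y n), Complex.mul_re, Complex.normSq_apply]
    ring
  simp only [hi]
  rw [← Finset.mul_sum, Finset.sum_sub_distrib, hp, hs]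
  have hc : Real.cos (2 * Real.pi * ν) = 1 - 2 * Real.sin (Real.pi * ν) ^ 2 := by
    rw [mul_assoc, Real.cos_two_mul, Real.cos_sq']
    ring
  rw [hc]
  field_simp
  ring

lemma sin_lower (v : ℝ) (h0 : 0 ≤ v) (h1 : v ≤ 2 / 5) :
    (21 / 10) * v ≤ Real.sin (Real.pi * v) := by
  rcases h0.eq_or_lt with rfl | hv
  · simp
  have p1 := Real.pi_gt_d2
  have p2 := Real.pi_lt_d2
  set z := Real.pi * v / 2 with hz
  have hz0 : 0 < z := by positivity
  have hz1 : z ≤ 63 / 100 := by rw [hz]; nlinarith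
  have e : Real.pi * v = 2 * z := by rw [hz]; ring
  rw [e, Real.sin_two_mul]
  have hs := Real.sin_gt_sub_cube hz0
  have hc := Real.one_sub_sq_div_two_le_cos (x := z)
  have hzz : z ^ 2 ≤ 397 / 1000 := by nlinarith
  have c1 : (801 / 1000 : ℝ) ≤ Real.cos z := by linarith
  have s1 : (900 / 1000) * z ≤ Real.sin z := by nlinarith
  have : (900 / 1000) * z * (801 / 1000) ≤ Real.sin z * Real.cos z :=
    mul_le_mul s1 c1 (by norm_num) (by nlinarith)
  have hvz : 157 / 100 * v ≤ z := by rw [hz]; nlinarith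
  nlinarith

lemma sin_sq_lower (v : ℝ) (h : |v| ≤ 2 / 5) :
    (441 / 100) * v ^ 2 ≤ Real.sin (Real.pi * v) ^ 2 := by
  have h1 := sin_lower |v| (abs_nonneg _) h
  have h2 : Real.sin (Real.pi * |v|) ^ 2 = Real.sin (Real.pi * v) ^ 2 := by
    rcases abs_cases v with ⟨h, _⟩ | ⟨h, _⟩ <;> rw [h]
    rw [mul_neg, Real.sin_neg, neg_sq]
  rw [← h2, ← sq_abs v]
  nlinarith [abs_nonneg v]

/-- For `N ≥ 100`, nonnegative `x ∈ ℝ^N`, `|ν| ≤ 2/5`, and `x^I = Im(F_ν^{-1}(F x))`,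
`‖x^I‖₂² ≥ ν²[(4 + 2π²/N)‖x‖₂² − (2π²/N)‖x‖₁²]`. -/
theorem gridTransform_im_lower_bound (N : ℕ) (hN : 100 ≤ N) (x : Fin N → ℝ)
    (hx : ∀ n, 0 ≤ x n) (ν : ℝ) (hν : |ν| ≤ 2 / 5) :
    ν^2 * ((4 + 2 * Real.pi^2 / (N : ℝ)) * ∑ n, (x n)^2
        - 2 * Real.pi^2 / (N : ℝ) * (∑ n, |x n|)^2)
      ≤ ∑ n, ((gridTransform N ν x n).im)^2 := by
  have : NeZero N := ⟨by omega⟩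
  rw [exact_id]
  simp only [fun n => abs_of_nonneg (hx n)]
  have hN' : (100 : ℝ) ≤ N := by exact_mod_cast hN
  have hAB : ∑ n, x n ^ 2 ≤ (∑ n, x n) ^ 2 :=
    Finset.sum_sq_le_sq_sum_of_nonneg fun n _ => hx n
  have hA : 0 ≤ ∑ n, x n ^ 2 := Finset.sum_nonneg fun n _ => sq_nonneg _
  set A := ∑ n, x n ^ 2
  set B := (∑ n, x n) ^ 2
  have hl := sin_sq_lower ν hν
  have hu : Real.sin (Real.pi * ν) ^ 2 ≤ Real.pi ^ 2 * ν ^ 2 := by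
    have := Real.abs_sin_le_abs (x := Real.pi * ν)
    have := sq_le_sq.mpr this
    rwa [mul_pow] at this
  set S := Real.sin (Real.pi * ν) ^ 2
  have hi0 : 0 ≤ (N : ℝ)⁻¹ := by positivity
  have hi1 : (N : ℝ)⁻¹ ≤ 1 / 100 := by
    rw [inv_le_comm₀ (by linarith) (by norm_num)]; norm_num; exact hN
  set q := (N : ℝ)⁻¹
  rw [div_eq_mul_inv, div_eq_mul_inv]
  change ν ^ 2 * ((4 + 2 * Real.pi ^ 2 * q) * A - 2 * Real.pi ^ 2 * q * B) ≤ S * (A - B * q)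
  have k1 : 0 ≤ (S * (1 - q) - 4 * ν ^ 2) * A := by
    apply mul_nonneg _ hA
    nlinarith [sq_nonneg ν]
  have k2 : 0 ≤ (2 * (Real.pi ^ 2 * ν ^ 2) - S) * (q * (B - A)) := by
    apply mul_nonneg
    · have : 0 ≤ Real.pi ^ 2 * ν ^ 2 := by positivity
      linarith
    · exact mul_nonneg hi0 (by linarith)
  linarith
end

section
/- Let N be a positive integer, x ∈ ℝ^N, and ν ∈ ℝ, and set x^I := Im(F_ν^{−1}(F x)). Then (F_ν x^I)_0 = 0, and for every integer t with 1 ≤ t ≤ N − 1, (F_ν x^I)_t = sin(πν)·exp(−iπν)·(F x)_t; in particular |(F_ν x^I)_t| = |sin(πν)|·|(F x)_t| for all t ∈ {1,…,N−1}. -/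
open Matrix

open ComplexConjugate in
lemma aux_conj (N : ℕ) (hN : 0 < N) (ν : ℝ) (s t k : Fin N) (h : (s : ℕ) + (t : ℕ) = N) :
    conj (Fmat N ν t k) = Complex.exp (2 * Real.pi * ν * Complex.I) * Fmat N ν s k := by
  have hN' : (N : ℂ) ≠ 0 := by exact_mod_cast hN.ne'
  have hs : ((s : ℕ) : ℂ) = N - ((t : ℕ) : ℂ) := by
    rw [eq_sub_iff_add_eq]; exact_mod_cast h
  simp only [Fmat, Matrix.of_apply]
  rw [← Complex.exp_conj, ← Complex.exp_add, Complex.exp_eq_exp_iff_exists_int]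
  refine ⟨(k : ℕ), ?_⟩
  simp only [map_mul, Complex.conj_ofReal, Complex.conj_I]
  push_cast
  rw [hs]
  field_simp
  ring

lemma aux_orth (N : ℕ) (hN : 0 < N) (ν : ℝ) :
    Fmat N ν * (((N : ℂ))⁻¹ • (Fmat N ν)ᴴ) = 1 := by
  have hN' : (N : ℂ) ≠ 0 := by exact_mod_cast hN.ne'
  ext t s
  rw [Matrix.mul_smul, Matrix.smul_apply, Matrix.mul_apply]
  set w : ℂ := Complex.exp (2 * Real.pi * Complex.I * ((((s : ℕ) : ℂ) - ((t : ℕ) : ℂ)) / N)) with hw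
  have key : ∀ k : Fin N, Fmat N ν t k * (Fmat N ν)ᴴ k s =
      Complex.exp (2 * Real.pi * Complex.I * ((((s : ℕ) : ℂ) - ((t : ℕ) : ℂ)) / N) * ν) * w ^ (k : ℕ) := by
    intro k
    rw [hw, ← Complex.exp_nat_mul, ← Complex.exp_add, Matrix.conjTranspose_apply]
    simp only [Fmat, Matrix.of_apply, Complex.star_def]
    rw [← Complex.exp_conj, ← Complex.exp_add]
    congr 1
    simp only [map_mul, Complex.conj_ofReal, Complex.conj_I]
    push_cast
    field_simp
    ring
  simp_rw [key]
  rw [← Finset.mul_sum, Fin.sum_univ_eq_sum_range (fun k => w ^ k) N]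
  by_cases hts : t = s
  · subst hts
    simp [hw, hN']
  · rw [Matrix.one_apply_ne hts]
    have hwN : w ^ N = 1 := by
      rw [hw, ← Complex.exp_nat_mul, Complex.exp_eq_one_iff]
      refine ⟨((s : ℕ) : ℤ) - ((t : ℕ) : ℤ), ?_⟩
      push_cast
      field_simp
    have hw1 : w ≠ 1 := by
      intro h
      rw [hw, Complex.exp_eq_one_iff] at h
      obtain ⟨n, hn⟩ := h
      rw [mul_comm (n : ℂ), mul_right_inj' Complex.two_pi_I_ne_zero, div_eq_iff hN'] at hn
      have hn' : ((s : ℕ) : ℤ) - ((t : ℕ) : ℤ) = n * N := by exact_mod_cast hn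
      have h1 := s.isLt
      have h2 := t.isLt
      have h3 : n < 1 := by
        by_contra hc
        nlinarith
      have h4 : -1 < n := by
        by_contra hc
        nlinarith
      have h5 : n = 0 := by omega
      subst h5
      apply hts
      ext
      omega
    have := geom_sum_mul w N
    rw [hwN, sub_self] at this
    rw [(mul_eq_zero.mp this).resolve_right (sub_ne_zero.mpr hw1)]
    simp

lemma aux_grid (N : ℕ) (hN : 0 < N) (ν : ℝ) (x : Fin N → ℝ) :
    Fmat N ν *ᵥ gridTransform N ν x = Fmat N 0 *ᵥ fun k => ((x k : ℝ) : ℂ) := by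
  rw [gridTransform, Matrix.mulVec_mulVec, aux_orth N hN, Matrix.one_mulVec]

open ComplexConjugate in
lemma aux_im (N : ℕ) (hN : 0 < N) (ν : ℝ) (x : Fin N → ℝ) (t : Fin N) :
    (Fmat N ν *ᵥ fun n => (((gridTransform N ν x n).im : ℝ) : ℂ)) t =
    ((Fmat N 0 *ᵥ fun k => ((x k : ℝ) : ℂ)) t
      - conj (∑ k, conj (Fmat N ν t k) * gridTransform N ν x k)) / (2 * Complex.I) := by
  rw [← aux_grid N hN ν x, map_sum]
  simp only [Matrix.mulVec, dotProduct]
  rw [← Finset.sum_sub_distrib, Finset.sum_div]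
  refine Finset.sum_congr rfl fun k _ => ?_
  rw [Complex.im_eq_sub_conj, map_mul, Complex.conj_conj]
  ring

open ComplexConjugate in
lemma aux_main (N : ℕ) (hN : 0 < N) (ν : ℝ) (x : Fin N → ℝ) (t : Fin N) (ht : 1 ≤ (t : ℕ)) :
      (Fmat N ν *ᵥ fun n => (((gridTransform N ν x n).im : ℝ) : ℂ)) t
        = ((Real.sin (Real.pi * ν) : ℝ) : ℂ) *
            Complex.exp (((-(Real.pi * ν)) : ℝ) * Complex.I) *
            ((Fmat N 0 *ᵥ fun k => ((x k : ℝ) : ℂ)) t) := by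
  have hlt := t.isLt
  let s : Fin N := ⟨N - t, by omega⟩
  have hst : (s : ℕ) + (t : ℕ) = N := by simp only [s]; omega
  have h1 : ∑ k, conj (Fmat N ν t k) * gridTransform N ν x k =
      Complex.exp (2 * Real.pi * ν * Complex.I) * (Fmat N 0 *ᵥ fun k => ((x k : ℝ) : ℂ)) s := by
    rw [← aux_grid N hN ν x]
    simp only [Matrix.mulVec, dotProduct]
    rw [Finset.mul_sum]
    refine Finset.sum_congr rfl fun k _ => ?_
    rw [aux_conj N hN ν s t k hst, mul_assoc]
  have h2 : conj ((Fmat N 0 *ᵥ fun k => ((x k : ℝ) : ℂ)) s) =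
      (Fmat N 0 *ᵥ fun k => ((x k : ℝ) : ℂ)) t := by
    simp only [Matrix.mulVec, dotProduct]
    rw [map_sum]
    refine Finset.sum_congr rfl fun k _ => ?_
    rw [map_mul, aux_conj N hN 0 t s k (by omega), Complex.conj_ofReal]
    simp
  rw [aux_im N hN, h1, map_mul, h2, ← Complex.exp_conj]
  have e1 : conj (2 * (Real.pi : ℂ) * ν * Complex.I) = -(Real.pi * ν * Complex.I) + -(Real.pi * ν * Complex.I) := by
    simp only [map_mul, Complex.conj_ofReal, Complex.conj_I, map_ofNat]
    ring
  rw [e1, Complex.exp_add, Complex.ofReal_sin, Complex.sin]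
  push_cast
  simp only [neg_mul]
  have e2 : Complex.exp (Real.pi * ν * Complex.I) * Complex.exp (-(Real.pi * ν * Complex.I)) = 1 := by
    rw [← Complex.exp_add]; simp
  rw [div_eq_iff (by simp)]
  linear_combination (-(Fmat N 0 *ᵥ fun k => ((x k : ℝ) : ℂ)) t) * e2 + (Complex.exp (-(Real.pi * ν * Complex.I)) * (Complex.exp (-(Real.pi * ν * Complex.I)) - Complex.exp (Real.pi * ν * Complex.I)) * (-(Fmat N 0 *ᵥ fun k => ((x k : ℝ) : ℂ)) t)) * Complex.I_sq

/-- With `x^I = Im(F_ν^{-1}(F x))`: `(F_ν x^I)_0 = 0`; for `1 ≤ t ≤ N−1`,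
`(F_ν x^I)_t = sin(πν) exp(−iπν) (F x)_t`; in particular
`|(F_ν x^I)_t| = |sin(πν)| |(F x)_t|` for those `t`. -/
theorem Fnu_mulVec_im_part (N : ℕ) (hN : 0 < N) (x : Fin N → ℝ) (ν : ℝ) :
    ((Fmat N ν *ᵥ fun n => (((gridTransform N ν x n).im : ℝ) : ℂ)) ⟨0, hN⟩ = 0) ∧
    (∀ t : Fin N, 1 ≤ (t : ℕ) →
      (Fmat N ν *ᵥ fun n => (((gridTransform N ν x n).im : ℝ) : ℂ)) t
        = ((Real.sin (Real.pi * ν) : ℝ) : ℂ) *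
            Complex.exp (((-(Real.pi * ν)) : ℝ) * Complex.I) *
            ((Fmat N 0 *ᵥ fun k => ((x k : ℝ) : ℂ)) t)) ∧
    (∀ t : Fin N, 1 ≤ (t : ℕ) →
      ‖(Fmat N ν *ᵥ fun n => (((gridTransform N ν x n).im : ℝ) : ℂ)) t‖
        = |Real.sin (Real.pi * ν)| *
            ‖(Fmat N 0 *ᵥ fun k => ((x k : ℝ) : ℂ)) t‖) := by
  refine ⟨?_, fun t ht => aux_main N hN ν x t ht, fun t ht => ?_⟩
  · rw [aux_im N hN]
    have h0 : ∀ (μ : ℝ) (k : Fin N), Fmat N μ ⟨0, hN⟩ k = 1 := by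
      intro μ k; simp [Fmat]
    have h1 : ∑ k, (starRingEnd ℂ) (Fmat N ν ⟨0, hN⟩ k) * gridTransform N ν x k =
        (Fmat N 0 *ᵥ fun k => ((x k : ℝ) : ℂ)) ⟨0, hN⟩ := by
      rw [← aux_grid N hN ν x]
      simp [Matrix.mulVec, dotProduct, h0]
    rw [h1]
    simp [Matrix.mulVec, dotProduct, h0]
  · rw [aux_main N hN ν x t ht, norm_mul, norm_mul, Complex.norm_exp_ofReal_mul_I,
      Complex.norm_real, Real.norm_eq_abs, mul_one]
end

section
/- Let N be a positive integer and let 𝓕 be a finite set of frequencies, where each f ∈ 𝓕 is written f = (n_f + ν_f)/N with n_f ∈ {0,…,N−1} and ν_f ∈ (−1/2, 1/2], with real amplitudes p_f. Let y ∈ ℂ^N be the time-domain signal y_t = Σ_{f∈𝓕} p_f·exp(−2πi·f·t) for t = 0,…,N−1, and let y_on := F·Re(F^{−1}y) and y_off := i·F·Im(F^{−1}y) be its on-grid and off-grid components. Then (y_off)_0 = 0 and (y_on)_0 = Σ_{f∈𝓕} p_f, and for every t ∈ {1,…,N−1}: (y_off)_t = −i·Σ_{f∈𝓕} p_f·sin(πν_f)·exp(iπν_f)·exp(−2πi·f·t)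 and (y_on)_t = Σ_{f∈𝓕} p_f·cos(πν_f)·exp(iπν_f)·exp(−2πi·f·t). -/
open Matrix

/-- `F^{-1} y = (1/N) F^* y`. -/
noncomputable def invF (N : ℕ) (y : Fin N → ℂ) : Fin N → ℂ :=
  (((N : ℂ))⁻¹ • (Fmat N 0)ᴴ) *ᵥ y

/-- The on-grid component `y_on = F · Re(F^{-1} y)`. -/
noncomputable def onGrid (N : ℕ) (y : Fin N → ℂ) : Fin N → ℂ :=
  Fmat N 0 *ᵥ fun n => (((invF N y n).re : ℝ) : ℂ)

/-- The off-grid component `y_off = i · F · Im(F^{-1} y)`. -/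
noncomputable def offGrid (N : ℕ) (y : Fin N → ℂ) : Fin N → ℂ :=
  fun t => Complex.I * ((Fmat N 0 *ᵥ fun n => (((invF N y n).im : ℝ) : ℂ)) t)

noncomputable def zetaN (N : ℕ) : ℂ := Complex.exp (2 * Real.pi * Complex.I / N)

lemma zetaN_prim (N : ℕ) (hN : 0 < N) : IsPrimitiveRoot (zetaN N) N :=
  Complex.isPrimitiveRoot_exp N hN.ne'

lemma zetaN_ne (N : ℕ) : zetaN N ≠ 0 := Complex.exp_ne_zero _

lemma conj_zetaN (N : ℕ) : star (zetaN N) = (zetaN N)⁻¹ := by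
  unfold zetaN
  rw [← Complex.exp_neg, Complex.star_def, ← Complex.exp_conj]
  congr 1
  simp [neg_div, Complex.conj_ofNat]

lemma Fmat_eq (N : ℕ) (t k : Fin N) :
    Fmat N 0 t k = ((zetaN N)⁻¹) ^ ((t : ℕ) * (k : ℕ)) := by
  unfold zetaN Fmat
  rw [← Complex.exp_neg, ← Complex.exp_nat_mul, Matrix.of_apply]
  congr 1
  push_cast
  ring

lemma star_Fmat (N : ℕ) (t k : Fin N) :
    star (Fmat N 0 t k) = (zetaN N) ^ ((t : ℕ) * (k : ℕ)) := by
  rw [Fmat_eq, star_pow, star_inv₀, conj_zetaN, inv_inv]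

lemma Fmat_mul (N : ℕ) (hN : 0 < N) :
    Fmat N 0 * (Fmat N 0)ᴴ = (N : ℂ) • (1 : Matrix (Fin N) (Fin N) ℂ) := by
  have hz := zetaN_ne N
  have hp := zetaN_prim N hN
  ext t s
  rw [Matrix.mul_apply]
  simp only [Matrix.conjTranspose_apply, star_Fmat]
  simp only [Fmat_eq, Matrix.smul_apply]
  have h1 : ∀ k : Fin N, (zetaN N)⁻¹ ^ ((t : ℕ) * (k : ℕ)) * zetaN N ^ ((s : ℕ) * (k : ℕ))
      = (fun k : ℕ => ((zetaN N)⁻¹ ^ (t : ℕ) * zetaN N ^ (s : ℕ)) ^ k) k := by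
    intro k
    simp only [mul_pow, ← pow_mul]
  rw [Finset.sum_congr rfl (fun k _ => h1 k), Fin.sum_univ_eq_sum_range (fun k : ℕ => ((zetaN N)⁻¹ ^ (t : ℕ) * zetaN N ^ (s : ℕ)) ^ k)]
  by_cases hts : t = s
  · subst hts
    rw [← mul_pow, inv_mul_cancel₀ hz]
    simp
  · rw [Matrix.one_apply_ne hts, geom_sum_eq]
    · have : ((zetaN N)⁻¹ ^ (t : ℕ) * zetaN N ^ (s : ℕ)) ^ N = 1 := by
        rw [mul_pow, ← pow_mul, ← pow_mul, mul_comm (t : ℕ), mul_comm (s : ℕ), pow_mul, pow_mul,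
          inv_pow, hp.pow_eq_one]
        simp
      rw [this]; simp
    · intro h
      apply hts
      rw [inv_pow, inv_mul_eq_one₀ (pow_ne_zero _ hz)] at h
      exact Fin.ext (hp.pow_inj t.2 s.2 h)

lemma F_invF (N : ℕ) (hN : 0 < N) (y : Fin N → ℂ) : Fmat N 0 *ᵥ invF N y = y := by
  have : (N : ℂ) ≠ 0 := by exact_mod_cast hN.ne'
  unfold invF
  rw [Matrix.mulVec_mulVec, Matrix.mul_smul, Fmat_mul N hN, smul_smul, inv_mul_cancel₀ this,
    one_smul, Matrix.one_mulVec]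

lemma F_conj (N : ℕ) (hN : 0 < N) (y : Fin N → ℂ) (t s : Fin N)
    (hts : N ∣ (t : ℕ) + s) :
    (Fmat N 0 *ᵥ fun n => star (invF N y n)) t = star (y s) := by
  conv_rhs => rw [← F_invF N hN y]
  simp only [Matrix.mulVec, dotProduct, star_sum]
  refine Finset.sum_congr rfl fun k _ => ?_
  rw [star_mul', star_Fmat, Fmat_eq]
  congr 1
  have hz := zetaN_ne N
  rw [inv_pow]
  apply inv_eq_of_mul_eq_one_right
  rw [← pow_add, ← add_mul,
    (zetaN_prim N hN).pow_eq_one_iff_dvd]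
  exact hts.mul_right _

lemma on_eq (N : ℕ) (hN : 0 < N) (y : Fin N → ℂ) (t s : Fin N)
    (hts : N ∣ (t : ℕ) + s) : onGrid N y t = (y t + star (y s)) / 2 := by
  rw [← F_conj N hN y t s hts]
  conv_rhs => rw [← congrFun (F_invF N hN y) t]
  simp only [onGrid, Matrix.mulVec, dotProduct]
  rw [← Finset.sum_add_distrib, Finset.sum_div]
  refine Finset.sum_congr rfl fun k _ => ?_
  rw [Complex.re_eq_add_conj, Complex.star_def]
  ring

lemma on_add_off (N : ℕ) (hN : 0 < N) (y : Fin N → ℂ) (t : Fin N) :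
    onGrid N y t + offGrid N y t = y t := by
  conv_rhs => rw [← congrFun (F_invF N hN y) t]
  simp only [onGrid, offGrid, Matrix.mulVec, dotProduct]
  rw [Finset.mul_sum, ← Finset.sum_add_distrib]
  refine Finset.sum_congr rfl fun k _ => ?_
  conv_rhs => rw [← Complex.re_add_im (invF N y k)]
  ring

/-- Explicit formulas for the on-grid and off-grid components of the time-domain signal
`y_t = ∑_{f∈𝓕} p_f exp(−2πi f t)` with `f = (n_f + ν_f)/N`, `n_f ∈ {0,…,N−1}`,
`ν_f ∈ (−1/2, 1/2]`. -/
theorem onGrid_offGrid_formulas (N : ℕ) (hN : 0 < N)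
    (ι : Type) [Fintype ι] (nf : ι → ℕ) (hnf : ∀ i, nf i < N)
    (νf : ι → ℝ) (hνf : ∀ i, -(1 / 2) < νf i ∧ νf i ≤ 1 / 2)
    (p : ι → ℝ) (f : ι → ℝ) (hf : ∀ i, f i = ((nf i : ℝ) + νf i) / (N : ℝ))
    (y : Fin N → ℂ)
    (hy : ∀ t : Fin N, y t = ∑ i, (p i : ℂ) *
        Complex.exp (((-(2 * Real.pi * f i * ((t : ℕ) : ℝ))) : ℝ) * Complex.I)) :
    (offGrid N y ⟨0, hN⟩ = 0) ∧
    (onGrid N y ⟨0, hN⟩ = ∑ i, ((p i : ℝ) : ℂ)) ∧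
    (∀ t : Fin N, 1 ≤ (t : ℕ) →
      (offGrid N y t = -Complex.I * ∑ i, (p i : ℂ) *
          ((Real.sin (Real.pi * νf i) : ℝ) : ℂ) *
          Complex.exp (((Real.pi * νf i) : ℝ) * Complex.I) *
          Complex.exp (((-(2 * Real.pi * f i * ((t : ℕ) : ℝ))) : ℝ) * Complex.I)) ∧
      (onGrid N y t = ∑ i, (p i : ℂ) *
          ((Real.cos (Real.pi * νf i) : ℝ) : ℂ) *
          Complex.exp (((Real.pi * νf i) : ℝ) * Complex.I) *
          Complex.exp (((-(2 * Real.pi * f i * ((t : ℕ) : ℝ))) : ℝ) * Complex.I))) := by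
  have hNc : (N : ℂ) ≠ 0 := by exact_mod_cast hN.ne'
  have hy0 : y ⟨0, hN⟩ = ∑ i, ((p i : ℝ) : ℂ) := by
    rw [hy]; simp
  have hon0 : onGrid N y ⟨0, hN⟩ = ∑ i, ((p i : ℝ) : ℂ) := by
    rw [on_eq N hN y ⟨0, hN⟩ ⟨0, hN⟩ (by simp), hy0]
    simp
  have hadd := on_add_off N hN y
  refine ⟨?_, hon0, ?_⟩
  · have h := hadd ⟨0, hN⟩
    rw [hon0, hy0] at h
    simpa using h
  intro t ht
  have key : onGrid N y t = ∑ i, (p i : ℂ) *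
          ((Real.cos (Real.pi * νf i) : ℝ) : ℂ) *
          Complex.exp (((Real.pi * νf i) : ℝ) * Complex.I) *
          Complex.exp (((-(2 * Real.pi * f i * ((t : ℕ) : ℝ))) : ℝ) * Complex.I) := by
    rw [on_eq N hN y t ⟨N - t, by omega⟩ (by simp [Nat.add_sub_cancel' t.2.le]), hy, hy,
      star_sum, ← Finset.sum_add_distrib, Finset.sum_div]
    refine Finset.sum_congr rfl fun i _ => ?_
    have hc : star (Complex.exp (((-(2 * Real.pi * f i * ((N - (t : ℕ) : ℕ) : ℝ))) : ℝ) * Complex.I))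
        = Complex.exp (((Real.pi * νf i) : ℝ) * Complex.I) *
          Complex.exp (((Real.pi * νf i) : ℝ) * Complex.I) *
          Complex.exp (((-(2 * Real.pi * f i * ((t : ℕ) : ℝ))) : ℝ) * Complex.I) := by
      rw [Complex.star_def, ← Complex.exp_conj, ← Complex.exp_add, ← Complex.exp_add,
        Complex.exp_eq_exp_iff_exists_int]
      refine ⟨nf i, ?_⟩
      rw [Nat.cast_sub t.2.le, hf]
      simp only [map_mul, Complex.conj_ofReal, Complex.conj_I]
      push_cast
      field_simp
      ring
    rw [star_mul', hc, Complex.ofReal_cos, Complex.cos]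
    have he : Complex.exp (-((Real.pi * νf i : ℝ) : ℂ) * Complex.I) *
        Complex.exp (((Real.pi * νf i) : ℝ) * Complex.I) = 1 := by
      rw [← Complex.exp_add]; simp
    simp only [Complex.star_def, Complex.conj_ofReal]
    linear_combination (-(p i : ℂ) / 2 *
      Complex.exp (((-(2 * Real.pi * f i * ((t : ℕ) : ℝ))) : ℝ) * Complex.I)) * he
  refine ⟨?_, key⟩
  rw [eq_sub_of_add_eq' (hadd t), key, hy, ← Finset.sum_sub_distrib, Finset.mul_sum]
  refine Finset.sum_congr rfl fun i _ => ?_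
  have he : Complex.exp (((Real.pi * νf i : ℝ) : ℂ) * Complex.I) *
      ((Real.cos (Real.pi * νf i) : ℝ) - (Real.sin (Real.pi * νf i) : ℝ) * Complex.I) = 1 := by
    have h2 := Complex.sin_sq_add_cos_sq ((Real.pi * νf i : ℝ) : ℂ)
    rw [Complex.exp_mul_I, Complex.ofReal_cos, Complex.ofReal_sin]
    linear_combination h2 - Complex.sin ((Real.pi * νf i : ℝ) : ℂ) ^ 2 * Complex.I_sq
  linear_combination (-(p i : ℂ) *
      Complex.exp (((-(2 * Real.pi * f i * ((t : ℕ) : ℝ))) : ℝ) * Complex.I)) * he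
end
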